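/- Assume that for every i ∈ [6], every vertex v ∈ V_i, and all distinct j, k ∈ [6]∖{i}, there exist v_j ∈ V_j and v_k ∈ V_k with {v, v_j, v_k} ∈ E. Then diam(G_S) ≤ 2 if and only if there is no independent set (v_1,…,v_6) ∈ V_1×⋯×V_6 in G, i.e., no tuple such that no 3-element subset of {v_1,…,v_6} is a hyperedge of E. -/

import Mathlib

open scoped Classical

/-- A vertex of the 6-partite 3-uniform hypergraph: a part `ℓ ∈ Fin 6` together with a
value in `[n]` (represented by `Fin n`). -/
abbrev HypVert (n : ℕ) := Fin 6 × Fin n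

/-- The value `v/(n+1)` associated to a vertex value `v ∈ [n]` (here `v : Fin n` represents
the value `v+1 ∈ [n]`). -/
noncomputable def hval (n : ℕ) (v : Fin n) : ℝ := ((v : ℕ) + 1) / ((n : ℝ) + 1)

/-- The set of parts met by a set of hypergraph vertices. -/
def hparts {n : ℕ} (e : Finset (HypVert n)) : Finset (Fin 6) := e.image Prod.fst

/-- The hyperedge set is well-formed: every hyperedge consists of `3` vertices lying in
three pairwise distinct parts. -/
def WellFormed {n : ℕ} (E : Set (Finset (HypVert n))) : Prop :=
  ∀ e ∈ E, e.card = 3 ∧ (hparts e).card = 3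

/-- The vertex triple `{(1, x₁), (2, x₂), (3, x₃)}` (parts `1,2,3`, `0`-based `0,1,2`). -/
def tripleL {n : ℕ} (x : Fin 3 → Fin n) : Finset (HypVert n) :=
  Finset.univ.image fun ℓ : Fin 3 => ((⟨(ℓ : ℕ), by have := ℓ.isLt; omega⟩ : Fin 6), x ℓ)

/-- The vertex triple `{(4, y₄), (5, y₅), (6, y₆)}` (parts `4,5,6`, `0`-based `3,4,5`). -/
def tripleR {n : ℕ} (y : Fin 3 → Fin n) : Finset (HypVert n) :=
  Finset.univ.image fun ℓ : Fin 3 => ((⟨(ℓ : ℕ) + 3, by have := ℓ.isLt; omega⟩ : Fin 6), y ℓ)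

/-- The left-half center `X x`: in the coordinate pair of part `ℓ ∈ {1,2,3}` it equals
`(x_ℓ/(n+1), 1 − x_ℓ/(n+1))`, and it equals `(2,2)` in the coordinate pairs of parts
`4,5,6`.  (The `12` coordinates are indexed by `Fin 6 × Fin 2`: a part and a position
within its coordinate pair.) -/
noncomputable def Xpt (n : ℕ) (x : Fin 3 → Fin n) : Fin 6 × Fin 2 → ℝ := fun p =>
  if h : (p.1 : ℕ) < 3 then
    (if p.2 = 0 then hval n (x ⟨(p.1 : ℕ), h⟩) else 1 - hval n (x ⟨(p.1 : ℕ), h⟩))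
  else 2

/-- The right-half center `Y y`: `(2,2)` in the coordinate pairs of parts `1,2,3` and
`(y_ℓ/(n+1), 1 − y_ℓ/(n+1))` in the coordinate pair of part `ℓ ∈ {4,5,6}`. -/
noncomputable def Ypt (n : ℕ) (y : Fin 3 → Fin n) : Fin 6 × Fin 2 → ℝ := fun p =>
  if h : 3 ≤ (p.1 : ℕ) then
    (if p.2 = 0 then hval n (y ⟨(p.1 : ℕ) - 3, by have := p.1.isLt; omega⟩)
     else 1 - hval n (y ⟨(p.1 : ℕ) - 3, by have := p.1.isLt; omega⟩))
  else 2

/-- The edge center of a hyperedge `e`: in the coordinate pair of a part `ℓ` met by `e`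
(with vertex value `v`) it equals `(1 + v/(n+1), 2 − v/(n+1))`, and it equals `(1,1)` in the
coordinate pairs of all other parts. -/
noncomputable def Ept (n : ℕ) (e : Finset (HypVert n)) : Fin 6 × Fin 2 → ℝ := fun p =>
  if (∃ v : Fin n, (p.1, v) ∈ e) then
    (if p.2 = 0 then 1 + ∑ v : Fin n, (if (p.1, v) ∈ e then hval n v else 0)
     else 2 - ∑ v : Fin n, (if (p.1, v) ∈ e then hval n v else 0))
  else 1

/-- Vertices of the hypercube-center graph `G_S`: left-half centers for non-hyperedge
triples from `V₁ × V₂ × V₃`, right-half centers for non-hyperedge triples from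
`V₄ × V₅ × V₆`, and edge centers for hyperedges whose parts lie neither all in `{1,2,3}`
nor all in `{4,5,6}`. -/
inductive GSVert (n : ℕ) (E : Set (Finset (HypVert n))) : Type where
  | left (x : Fin 3 → Fin n) (h : tripleL x ∉ E)
  | right (y : Fin 3 → Fin n) (h : tripleR y ∉ E)
  | edge (e : Finset (HypVert n)) (he : e ∈ E)
      (h1 : ¬ hparts e ⊆ ({0, 1, 2} : Finset (Fin 6)))
      (h2 : ¬ hparts e ⊆ ({3, 4, 5} : Finset (Fin 6)))

/-- The center in `ℝ^12` associated to each vertex of `G_S`. -/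
noncomputable def gsPos {n : ℕ} {E : Set (Finset (HypVert n))} :
    GSVert n E → (Fin 6 × Fin 2 → ℝ)
  | .left x _ => Xpt n x
  | .right y _ => Ypt n y
  | .edge e _ _ _ => Ept n e

/-- The hypercube-center graph `G_S`: two distinct centers are adjacent iff their
`ℓ∞`-distance is at most `1` (the distance on `Fin 6 × Fin 2 → ℝ` is the sup-metric), i.e.
iff the closed axis-parallel unit hypercubes around them intersect. -/
noncomputable def gsGraph (n : ℕ) (E : Set (Finset (HypVert n))) :
    SimpleGraph (GSVert n E) :=
  SimpleGraph.fromRel fun u v => dist (gsPos u) (gsPos v) ≤ 1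

theorem SimpleGraph.edist_le_two_of_adj_of_adj {V : Type*} {G : SimpleGraph V} {u v w : V}
    (huw : G.Adj u w) (hwv : G.Adj w v) : G.edist u v ≤ 2 :=
  (SimpleGraph.Walk.cons huw (SimpleGraph.Walk.cons hwv SimpleGraph.Walk.nil)).edist_le

theorem SimpleGraph.Adj.edist_le_two {V : Type*} {G : SimpleGraph V} {u v : V}
    (h : G.Adj u v) : G.edist u v ≤ 2 :=
  (SimpleGraph.edist_eq_one_iff_adj.mpr h).le.trans (by norm_num)

theorem SimpleGraph.exists_adj_adj_of_edist_le_two {V : Type*} {G : SimpleGraph V} {u v : V}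
    (h : G.edist u v ≤ 2) (hne : u ≠ v) (hadj : ¬ G.Adj u v) :
    ∃ w, G.Adj u w ∧ G.Adj w v := by
  by_contra! hw
  refine h.not_gt (SimpleGraph.two_lt_edist_iff.mpr ⟨hne, hadj, ?_⟩)
  exact Set.eq_empty_of_forall_notMem fun w ⟨huw, hvw⟩ => hw w huw (SimpleGraph.Adj.symm hvw)

theorem hval_pos {n : ℕ} (v : Fin n) : 0 < hval n v := by
  unfold hval; positivity

theorem hval_lt_one {n : ℕ} (v : Fin n) : hval n v < 1 := by
  unfold hval
  rw [div_lt_one (by positivity)]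
  have : ((v : ℕ) : ℝ) < n := by exact_mod_cast v.isLt
  linarith

theorem hval_injective (n : ℕ) : Function.Injective (hval n) := by
  intro a b h
  unfold hval at h
  rw [div_left_inj' (by positivity)] at h
  have h' : ((a : ℕ) : ℝ) = b := by linarith
  exact Fin.ext (by exact_mod_cast h')

theorem mem_tripleL {n : ℕ} {x : Fin 3 → Fin n} {ℓ : Fin 6} {v : Fin n} :
    (ℓ, v) ∈ tripleL x ↔ ∃ h : (ℓ : ℕ) < 3, x ⟨ℓ, h⟩ = v := by
  simp only [tripleL, Finset.mem_image, Finset.mem_univ, true_and, Prod.mk.injEq]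
  constructor
  · rintro ⟨k, rfl, rfl⟩
    exact ⟨k.isLt, rfl⟩
  · rintro ⟨h, rfl⟩
    exact ⟨⟨ℓ, h⟩, rfl, rfl⟩

theorem mem_tripleR {n : ℕ} {y : Fin 3 → Fin n} {ℓ : Fin 6} {v : Fin n} :
    (ℓ, v) ∈ tripleR y ↔ 3 ≤ (ℓ : ℕ) ∧ y ⟨(ℓ : ℕ) - 3, by have := ℓ.isLt; omega⟩ = v := by
  simp only [tripleR, Finset.mem_image, Finset.mem_univ, true_and, Prod.mk.injEq]
  constructor
  · rintro ⟨k, rfl, rfl⟩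
    exact ⟨by simp, rfl⟩
  · rintro ⟨h, rfl⟩
    exact ⟨⟨(ℓ : ℕ) - 3, by have := ℓ.isLt; omega⟩, Fin.ext (by simp only; omega), rfl⟩

theorem card_tripleL_le {n : ℕ} (x : Fin 3 → Fin n) : (tripleL x).card ≤ 3 :=
  Finset.card_image_le.trans (by simp)

theorem card_tripleR_le {n : ℕ} (y : Fin 3 → Fin n) : (tripleR y).card ≤ 3 :=
  Finset.card_image_le.trans (by simp)

/-- A well-formed hyperedge meets each part in at most one vertex. -/
theorem WellFormed.eq_of_mem {n : ℕ} {E : Set (Finset (HypVert n))} (hE : WellFormed E)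
    {e : Finset (HypVert n)} (he : e ∈ E) {ℓ : Fin 6} {v w : Fin n}
    (hv : (ℓ, v) ∈ e) (hw : (ℓ, w) ∈ e) : v = w := by
  have hinj : Set.InjOn Prod.fst (e : Set (HypVert n)) := by
    rw [← Finset.card_image_iff]
    exact (hE e he).2.trans (hE e he).1.symm
  exact congrArg Prod.snd (hinj hv hw rfl)

theorem Ept_of_mem {n : ℕ} {E : Set (Finset (HypVert n))} (hE : WellFormed E)
    {e : Finset (HypVert n)} (he : e ∈ E) {ℓ : Fin 6} {v : Fin n} (hv : (ℓ, v) ∈ e) (i : Fin 2) :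
    Ept n e (ℓ, i) = if i = 0 then 1 + hval n v else 2 - hval n v := by
  have hsum : ∑ w : Fin n, (if (ℓ, w) ∈ e then hval n w else 0) = hval n v := by
    rw [Finset.sum_eq_single v, if_pos hv]
    · intro w _ hne
      exact if_neg fun hw => hne (hE.eq_of_mem he hw hv)
    · simp
  simp only [Ept]
  rw [if_pos ⟨v, hv⟩, hsum]

theorem Ept_of_forall_notMem {n : ℕ} {e : Finset (HypVert n)} {ℓ : Fin 6}
    (h : ¬ ∃ v : Fin n, (ℓ, v) ∈ e) (i : Fin 2) : Ept n e (ℓ, i) = 1 := by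
  simp only [Ept]
  rw [if_neg h]

theorem Ept_mem_Icc {n : ℕ} {E : Set (Finset (HypVert n))} (hE : WellFormed E)
    {e : Finset (HypVert n)} (he : e ∈ E) (p : Fin 6 × Fin 2) :
    Ept n e p ∈ Set.Icc (1 : ℝ) 2 := by
  obtain ⟨ℓ, i⟩ := p
  by_cases h : ∃ v : Fin n, (ℓ, v) ∈ e
  · obtain ⟨v, hv⟩ := h
    rw [Ept_of_mem hE he hv]
    have := hval_pos v
    have := hval_lt_one v
    split_ifs <;> constructor <;> linarith
  · rw [Ept_of_forall_notMem h]
    norm_num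

theorem Xpt_of_lt {n : ℕ} (x : Fin 3 → Fin n) {ℓ : Fin 6} (h : (ℓ : ℕ) < 3) (i : Fin 2) :
    Xpt n x (ℓ, i) = if i = 0 then hval n (x ⟨ℓ, h⟩) else 1 - hval n (x ⟨ℓ, h⟩) := by
  simp only [Xpt]
  rw [dif_pos h]

theorem Xpt_of_not_lt {n : ℕ} (x : Fin 3 → Fin n) {ℓ : Fin 6} (h : ¬ (ℓ : ℕ) < 3) (i : Fin 2) :
    Xpt n x (ℓ, i) = 2 := by
  simp only [Xpt]
  rw [dif_neg h]

theorem Ypt_of_le {n : ℕ} (y : Fin 3 → Fin n) {ℓ : Fin 6} (h : 3 ≤ (ℓ : ℕ)) (i : Fin 2) :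
    Ypt n y (ℓ, i) =
      if i = 0 then hval n (y ⟨(ℓ : ℕ) - 3, by have := ℓ.isLt; omega⟩)
      else 1 - hval n (y ⟨(ℓ : ℕ) - 3, by have := ℓ.isLt; omega⟩) := by
  simp only [Ypt]
  rw [dif_pos h]

theorem Ypt_of_not_le {n : ℕ} (y : Fin 3 → Fin n) {ℓ : Fin 6} (h : ¬ 3 ≤ (ℓ : ℕ)) (i : Fin 2) :
    Ypt n y (ℓ, i) = 2 := by
  simp only [Ypt]
  rw [dif_neg h]

/-- The coordinate pair of a half center and that of an edge center meeting the same part are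
within distance `1` exactly when the two vertex values coincide. -/
theorem forall_dist_pair_le_one_iff {n : ℕ} {a v : Fin n} :
    (∀ i : Fin 2, dist (if i = 0 then hval n a else 1 - hval n a)
      (if i = 0 then 1 + hval n v else 2 - hval n v) ≤ 1) ↔ a = v := by
  simp only [Real.dist_eq, abs_le, Fin.forall_fin_two, if_true, one_ne_zero, if_false]
  constructor
  · rintro ⟨⟨h₁, -⟩, h₂, -⟩
    exact hval_injective n (by linarith)
  · rintro rfl
    have := hval_pos a
    have := hval_lt_one a
    refine ⟨⟨?_, ?_⟩, ?_, ?_⟩ <;> linarith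

theorem dist_Xpt_Ept_le_one_iff {n : ℕ} {E : Set (Finset (HypVert n))} (hE : WellFormed E)
    {e : Finset (HypVert n)} (he : e ∈ E) (x : Fin 3 → Fin n) :
    dist (Xpt n x) (Ept n e) ≤ 1 ↔ ∀ p ∈ e, (p.1 : ℕ) < 3 → p ∈ tripleL x := by
  rw [dist_pi_le_iff zero_le_one]
  constructor
  · rintro h ⟨ℓ, v⟩ hv hℓ
    refine mem_tripleL.mpr ⟨hℓ, forall_dist_pair_le_one_iff.mp fun i => ?_⟩
    simpa only [Xpt_of_lt x hℓ, Ept_of_mem hE he hv] using h (ℓ, i)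
  · rintro h ⟨ℓ, i⟩
    by_cases hℓ : (ℓ : ℕ) < 3
    · by_cases hmem : ∃ v : Fin n, (ℓ, v) ∈ e
      · obtain ⟨v, hv⟩ := hmem
        rw [Xpt_of_lt x hℓ, Ept_of_mem hE he hv]
        obtain ⟨_, hx⟩ := mem_tripleL.mp (h _ hv hℓ)
        exact forall_dist_pair_le_one_iff.mpr hx i
      · rw [Xpt_of_lt x hℓ, Ept_of_forall_notMem hmem, Real.dist_eq, abs_le]
        have := hval_pos (x ⟨ℓ, hℓ⟩)
        have := hval_lt_one (x ⟨ℓ, hℓ⟩)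
        split_ifs <;> constructor <;> linarith
    · rw [Xpt_of_not_lt x hℓ, Real.dist_eq, abs_le]
      obtain ⟨h₁, h₂⟩ := Ept_mem_Icc hE he (ℓ, i)
      constructor <;> linarith

theorem dist_Ypt_Ept_le_one_iff {n : ℕ} {E : Set (Finset (HypVert n))} (hE : WellFormed E)
    {e : Finset (HypVert n)} (he : e ∈ E) (y : Fin 3 → Fin n) :
    dist (Ypt n y) (Ept n e) ≤ 1 ↔ ∀ p ∈ e, 3 ≤ (p.1 : ℕ) → p ∈ tripleR y := by
  rw [dist_pi_le_iff zero_le_one]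
  constructor
  · rintro h ⟨ℓ, v⟩ hv hℓ
    refine mem_tripleR.mpr ⟨hℓ, forall_dist_pair_le_one_iff.mp fun i => ?_⟩
    simpa only [Ypt_of_le y hℓ, Ept_of_mem hE he hv] using h (ℓ, i)
  · rintro h ⟨ℓ, i⟩
    by_cases hℓ : 3 ≤ (ℓ : ℕ)
    · by_cases hmem : ∃ v : Fin n, (ℓ, v) ∈ e
      · obtain ⟨v, hv⟩ := hmem
        rw [Ypt_of_le y hℓ, Ept_of_mem hE he hv]
        exact forall_dist_pair_le_one_iff.mpr (mem_tripleR.mp (h _ hv hℓ)).2 i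
      · rw [Ypt_of_le y hℓ, Ept_of_forall_notMem hmem, Real.dist_eq, abs_le]
        have := hval_pos (y ⟨(ℓ : ℕ) - 3, by have := ℓ.isLt; omega⟩)
        have := hval_lt_one (y ⟨(ℓ : ℕ) - 3, by have := ℓ.isLt; omega⟩)
        split_ifs <;> constructor <;> linarith
    · rw [Ypt_of_not_le y hℓ, Real.dist_eq, abs_le]
      obtain ⟨h₁, h₂⟩ := Ept_mem_Icc hE he (ℓ, i)
      constructor <;> linarith

theorem dist_Ept_Ept_le_one {n : ℕ} {E : Set (Finset (HypVert n))} (hE : WellFormed E)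
    {e f : Finset (HypVert n)} (he : e ∈ E) (hf : f ∈ E) : dist (Ept n e) (Ept n f) ≤ 1 := by
  rw [dist_pi_le_iff zero_le_one]
  intro p
  rw [Real.dist_eq, abs_le]
  obtain ⟨_, _⟩ := Ept_mem_Icc hE he p
  obtain ⟨_, _⟩ := Ept_mem_Icc hE hf p
  constructor <;> linarith

theorem dist_Xpt_Xpt_le_one {n : ℕ} (x x' : Fin 3 → Fin n) : dist (Xpt n x) (Xpt n x') ≤ 1 := by
  rw [dist_pi_le_iff zero_le_one]
  rintro ⟨ℓ, i⟩
  rw [Real.dist_eq, abs_le]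
  by_cases hℓ : (ℓ : ℕ) < 3
  · rw [Xpt_of_lt x hℓ, Xpt_of_lt x' hℓ]
    have := hval_pos (x ⟨ℓ, hℓ⟩)
    have := hval_lt_one (x ⟨ℓ, hℓ⟩)
    have := hval_pos (x' ⟨ℓ, hℓ⟩)
    have := hval_lt_one (x' ⟨ℓ, hℓ⟩)
    split_ifs <;> constructor <;> linarith
  · rw [Xpt_of_not_lt x hℓ, Xpt_of_not_lt x' hℓ]
    norm_num

theorem dist_Ypt_Ypt_le_one {n : ℕ} (y y' : Fin 3 → Fin n) : dist (Ypt n y) (Ypt n y') ≤ 1 := by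
  rw [dist_pi_le_iff zero_le_one]
  rintro ⟨ℓ, i⟩
  rw [Real.dist_eq, abs_le]
  by_cases hℓ : 3 ≤ (ℓ : ℕ)
  · rw [Ypt_of_le y hℓ, Ypt_of_le y' hℓ]
    have hlt : (ℓ : ℕ) - 3 < 3 := by have := ℓ.isLt; omega
    have := hval_pos (y ⟨(ℓ : ℕ) - 3, hlt⟩)
    have := hval_lt_one (y ⟨(ℓ : ℕ) - 3, hlt⟩)
    have := hval_pos (y' ⟨(ℓ : ℕ) - 3, hlt⟩)
    have := hval_lt_one (y' ⟨(ℓ : ℕ) - 3, hlt⟩)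
    split_ifs <;> constructor <;> linarith
  · rw [Ypt_of_not_le y hℓ, Ypt_of_not_le y' hℓ]
    norm_num

theorem one_lt_dist_Xpt_Ypt {n : ℕ} (x y : Fin 3 → Fin n) : 1 < dist (Xpt n x) (Ypt n y) := by
  refine lt_of_lt_of_le ?_ (dist_le_pi_dist (Xpt n x) (Ypt n y) (0, 0))
  rw [Xpt_of_lt x (by decide), Ypt_of_not_le y (by decide), if_pos rfl, Real.dist_eq, lt_abs]
  have := hval_lt_one (x ⟨((0 : Fin 6) : ℕ), by decide⟩)
  right
  linarith

theorem gsGraph_adj {n : ℕ} {E : Set (Finset (HypVert n))} {u v : GSVert n E} :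
    (gsGraph n E).Adj u v ↔ u ≠ v ∧ dist (gsPos u) (gsPos v) ≤ 1 := by
  rw [gsGraph, SimpleGraph.fromRel_adj, dist_comm (gsPos v), or_self]

theorem gsGraph_adj_left_edge {n : ℕ} {E : Set (Finset (HypVert n))} (hE : WellFormed E)
    {x : Fin 3 → Fin n} {hx : tripleL x ∉ E} {e : Finset (HypVert n)} {he : e ∈ E}
    {h₁ : ¬ hparts e ⊆ ({0, 1, 2} : Finset (Fin 6))}
    {h₂ : ¬ hparts e ⊆ ({3, 4, 5} : Finset (Fin 6))} :
    (gsGraph n E).Adj (.left x hx) (.edge e he h₁ h₂) ↔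
      ∀ p ∈ e, (p.1 : ℕ) < 3 → p ∈ tripleL x := by
  rw [gsGraph_adj, ← dist_Xpt_Ept_le_one_iff hE he]
  exact and_iff_right (by simp)

theorem gsGraph_adj_right_edge {n : ℕ} {E : Set (Finset (HypVert n))} (hE : WellFormed E)
    {y : Fin 3 → Fin n} {hy : tripleR y ∉ E} {e : Finset (HypVert n)} {he : e ∈ E}
    {h₁ : ¬ hparts e ⊆ ({0, 1, 2} : Finset (Fin 6))}
    {h₂ : ¬ hparts e ⊆ ({3, 4, 5} : Finset (Fin 6))} :
    (gsGraph n E).Adj (.right y hy) (.edge e he h₁ h₂) ↔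
      ∀ p ∈ e, 3 ≤ (p.1 : ℕ) → p ∈ tripleR y := by
  rw [gsGraph_adj, ← dist_Ypt_Ept_le_one_iff hE he]
  exact and_iff_right (by simp)

theorem gsGraph_not_adj_left_right {n : ℕ} {E : Set (Finset (HypVert n))}
    {x y : Fin 3 → Fin n} {hx : tripleL x ∉ E} {hy : tripleR y ∉ E} :
    ¬ (gsGraph n E).Adj (.left x hx) (.right y hy) :=
  fun h => (gsGraph_adj.mp h).2.not_gt (one_lt_dist_Xpt_Ypt x y)

/-- Any two distinct edge centers are adjacent, so reaching one of them suffices. -/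
theorem gsGraph_edist_edge_le_two {n : ℕ} {E : Set (Finset (HypVert n))} (hE : WellFormed E)
    {u : GSVert n E} {e f : Finset (HypVert n)} {he : e ∈ E} {hf : f ∈ E}
    {he₁ : ¬ hparts e ⊆ ({0, 1, 2} : Finset (Fin 6))}
    {he₂ : ¬ hparts e ⊆ ({3, 4, 5} : Finset (Fin 6))}
    {hf₁ : ¬ hparts f ⊆ ({0, 1, 2} : Finset (Fin 6))}
    {hf₂ : ¬ hparts f ⊆ ({3, 4, 5} : Finset (Fin 6))}
    (h : (gsGraph n E).Adj u (.edge e he he₁ he₂)) :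
    (gsGraph n E).edist u (.edge f hf hf₁ hf₂) ≤ 2 := by
  by_cases heq : (GSVert.edge e he he₁ he₂ : GSVert n E) = .edge f hf hf₁ hf₂
  · exact (heq ▸ h).edist_le_two
  · exact SimpleGraph.edist_le_two_of_adj_of_adj h
      (gsGraph_adj.mpr ⟨heq, dist_Ept_Ept_le_one hE he hf⟩)

theorem mem_hparts {n : ℕ} {e : Finset (HypVert n)} {ℓ : Fin 6} :
    ℓ ∈ hparts e ↔ ∃ v, (ℓ, v) ∈ e := by
  simp [hparts]

theorem exists_edge_adj_left {n : ℕ} {E : Set (Finset (HypVert n))} (hE : WellFormed E)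
    (htech : ∀ (w : HypVert n) (j k : Fin 6), j ≠ k → j ≠ w.1 → k ≠ w.1 →
      ∃ vj vk : Fin n, ({w, (j, vj), (k, vk)} : Finset (HypVert n)) ∈ E)
    (x : Fin 3 → Fin n) (hx : tripleL x ∉ E) :
    ∃ e he h₁ h₂, (gsGraph n E).Adj (.left x hx) (.edge e he h₁ h₂) := by
  obtain ⟨a, b, he⟩ := htech (0, x 0) 3 4 (by decide) (by simp) (by simp)
  refine ⟨_, he, fun h => ?_, fun h => ?_, (gsGraph_adj_left_edge hE).mpr ?_⟩
  · exact absurd (h (mem_hparts.mpr ⟨a, by simp⟩) : (3 : Fin 6) ∈ _) (by decide)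
  · exact absurd (h (mem_hparts.mpr ⟨x 0, by simp⟩) : (0 : Fin 6) ∈ _) (by decide)
  · simp only [Finset.mem_insert, Finset.mem_singleton]
    rintro p (rfl | rfl | rfl) hp
    · exact mem_tripleL.mpr ⟨hp, rfl⟩
    · exact absurd hp (by simp)
    · exact absurd hp (by simp)

theorem exists_edge_adj_right {n : ℕ} {E : Set (Finset (HypVert n))} (hE : WellFormed E)
    (htech : ∀ (w : HypVert n) (j k : Fin 6), j ≠ k → j ≠ w.1 → k ≠ w.1 →
      ∃ vj vk : Fin n, ({w, (j, vj), (k, vk)} : Finset (HypVert n)) ∈ E)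
    (y : Fin 3 → Fin n) (hy : tripleR y ∉ E) :
    ∃ e he h₁ h₂, (gsGraph n E).Adj (.right y hy) (.edge e he h₁ h₂) := by
  obtain ⟨a, b, he⟩ := htech (3, y 0) 0 1 (by decide) (by simp) (by simp)
  refine ⟨_, he, fun h => ?_, fun h => ?_, (gsGraph_adj_right_edge hE).mpr ?_⟩
  · exact absurd (h (mem_hparts.mpr ⟨y 0, by simp⟩) : (3 : Fin 6) ∈ _) (by decide)
  · exact absurd (h (mem_hparts.mpr ⟨a, by simp⟩) : (0 : Fin 6) ∈ _) (by decide)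
  · simp only [Finset.mem_insert, Finset.mem_singleton]
    rintro p (rfl | rfl | rfl) hp
    · exact mem_tripleR.mpr ⟨hp, rfl⟩
    · exact absurd hp (by simp)
    · exact absurd hp (by simp)

theorem lt_three_of_mem {ℓ : Fin 6} (h : ℓ ∈ ({0, 1, 2} : Finset (Fin 6))) : (ℓ : ℕ) < 3 := by
  revert ℓ; decide

theorem three_le_of_mem {ℓ : Fin 6} (h : ℓ ∈ ({3, 4, 5} : Finset (Fin 6))) : 3 ≤ (ℓ : ℕ) := by
  revert ℓ; decide

theorem mem_tripleL_of_mem_union {n : ℕ} {x y : Fin 3 → Fin n} {p : HypVert n}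
    (h : p ∈ tripleL x ∪ tripleR y) (hp : (p.1 : ℕ) < 3) : p ∈ tripleL x :=
  (Finset.mem_union.mp h).resolve_right fun h' => absurd (mem_tripleR.mp h').1 (by omega)

theorem mem_tripleR_of_mem_union {n : ℕ} {x y : Fin 3 → Fin n} {p : HypVert n}
    (h : p ∈ tripleL x ∪ tripleR y) (hp : 3 ≤ (p.1 : ℕ)) : p ∈ tripleR y :=
  (Finset.mem_union.mp h).resolve_left fun h' => absurd (mem_tripleL.mp h').1 (by omega)

/-- A left-half and a right-half center are at distance at most `2` iff some hyperedge is
contained in the union of their triples. -/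
theorem gsGraph_edist_left_right_le_two_iff {n : ℕ} {E : Set (Finset (HypVert n))}
    (hE : WellFormed E) {x y : Fin 3 → Fin n} (hx : tripleL x ∉ E) (hy : tripleR y ∉ E) :
    (gsGraph n E).edist (.left x hx) (.right y hy) ≤ 2 ↔
      ∃ e ∈ E, e ⊆ tripleL x ∪ tripleR y := by
  constructor
  · intro h
    obtain ⟨w, hxw, hwy⟩ := SimpleGraph.exists_adj_adj_of_edist_le_two h (by simp)
      gsGraph_not_adj_left_right
    match w, hxw, hwy with
    | .left _ _, _, hwy => exact absurd hwy gsGraph_not_adj_left_right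
    | .right _ _, hxw, _ => exact absurd hxw gsGraph_not_adj_left_right
    | .edge e he _ _, hxw, hwy =>
      refine ⟨e, he, fun p hp => Finset.mem_union.mpr ?_⟩
      rcases lt_or_ge (p.1 : ℕ) 3 with hlt | hge
      · exact Or.inl ((gsGraph_adj_left_edge hE).mp hxw p hp hlt)
      · exact Or.inr ((gsGraph_adj_right_edge hE).mp hwy.symm p hp hge)
  · rintro ⟨e, he, hsub⟩
    have h₁ : ¬ hparts e ⊆ ({0, 1, 2} : Finset (Fin 6)) := fun h => by
      suffices heq : e = tripleL x from hx (heq ▸ he)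
      refine Finset.eq_of_subset_of_card_le (fun p hp => ?_) ?_
      · exact mem_tripleL_of_mem_union (hsub hp)
          (lt_three_of_mem (h (mem_hparts.mpr ⟨p.2, hp⟩)))
      · exact (card_tripleL_le x).trans (hE e he).1.ge
    have h₂ : ¬ hparts e ⊆ ({3, 4, 5} : Finset (Fin 6)) := fun h => by
      suffices heq : e = tripleR y from hy (heq ▸ he)
      refine Finset.eq_of_subset_of_card_le (fun p hp => ?_) ?_
      · exact mem_tripleR_of_mem_union (hsub hp)
          (three_le_of_mem (h (mem_hparts.mpr ⟨p.2, hp⟩)))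
      · exact (card_tripleR_le y).trans (hE e he).1.ge
    exact SimpleGraph.edist_le_two_of_adj_of_adj (w := .edge e he h₁ h₂)
      ((gsGraph_adj_left_edge hE).mpr fun _ hp => mem_tripleL_of_mem_union (hsub hp))
      ((gsGraph_adj_right_edge hE).mpr fun _ hp => mem_tripleR_of_mem_union (hsub hp)).symm

/-- Under the technical assumption that every vertex extends to a
hyperedge through any two other prescribed distinct parts, `G_S` has diameter at most `2`
iff the hypergraph has no independent set choosing one vertex from each part, i.e. no pair
of triples `x, y` such that no hyperedge is contained in `tripleL x ∪ tripleR y`. -/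
theorem gsGraph_diam_le_two_iff (n : ℕ) (hn : 1 ≤ n) (E : Set (Finset (HypVert n)))
    (hE : WellFormed E)
    (htech : ∀ (w : HypVert n) (j k : Fin 6), j ≠ k → j ≠ w.1 → k ≠ w.1 →
      ∃ vj vk : Fin n, ({w, (j, vj), (k, vk)} : Finset (HypVert n)) ∈ E) :
    (gsGraph n E).ediam ≤ 2 ↔
      ¬ ∃ x y : Fin 3 → Fin n, ∀ e ∈ E, ¬ e ⊆ tripleL x ∪ tripleR y := by
  constructor
  · rintro h ⟨x, y, hxy⟩
    have hx : tripleL x ∉ E := fun hmem => hxy _ hmem Finset.subset_union_left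
    have hy : tripleR y ∉ E := fun hmem => hxy _ hmem Finset.subset_union_right
    obtain ⟨e, he, hsub⟩ := (gsGraph_edist_left_right_le_two_iff hE hx hy).mp
      (SimpleGraph.edist_le_ediam.trans h)
    exact hxy e he hsub
  · intro h
    push Not at h
    refine SimpleGraph.ediam_le_of_edist_le fun u v => ?_
    by_cases huv : u = v
    · simp [huv]
    match u, v, huv with
    | .left x _, .left x' _, huv =>
      exact (gsGraph_adj.mpr ⟨huv, dist_Xpt_Xpt_le_one x x'⟩).edist_le_two
    | .right y _, .right y' _, huv =>
      exact (gsGraph_adj.mpr ⟨huv, dist_Ypt_Ypt_le_one y y'⟩).edist_le_two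
    | .edge e he _ _, .edge f hf _ _, huv =>
      exact (gsGraph_adj.mpr ⟨huv, dist_Ept_Ept_le_one hE he hf⟩).edist_le_two
    | .left x hx, .right y hy, _ =>
      exact (gsGraph_edist_left_right_le_two_iff hE hx hy).mpr (h x y)
    | .right y hy, .left x hx, _ =>
      rw [SimpleGraph.edist_comm]
      exact (gsGraph_edist_left_right_le_two_iff hE hx hy).mpr (h x y)
    | .left x hx, .edge _ _ _ _, _ =>
      obtain ⟨_, _, _, _, hadj⟩ := exists_edge_adj_left hE htech x hx
      exact gsGraph_edist_edge_le_two hE hadj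
    | .edge _ _ _ _, .left x hx, _ =>
      obtain ⟨_, _, _, _, hadj⟩ := exists_edge_adj_left hE htech x hx
      rw [SimpleGraph.edist_comm]
      exact gsGraph_edist_edge_le_two hE hadj
    | .right y hy, .edge _ _ _ _, _ =>
      obtain ⟨_, _, _, _, hadj⟩ := exists_edge_adj_right hE htech y hy
      exact gsGraph_edist_edge_le_two hE hadj
    | .edge _ _ _ _, .right y hy, _ =>
      obtain ⟨_, _, _, _, hadj⟩ := exists_edge_adj_right hE htech y hy
      rw [SimpleGraph.edist_comm]
      exact gsGraph_edist_edge_le_two hE hadj
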